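/- arXiv:1912.13430 — 6 statements merged into one kernel-verified Lean document; each statement's English description precedes it below -/
import Mathlib

section
/- Let S, X, and Y be finite nonempty types, T : S → X → Y → S, idx : S → ℕ, and k ∈ ℕ. Define the k-capped Bellman backup operator B_k on functions V : S → ℕ by B_k(V)(s) = min(k, max over x ∈ X of max(idx(s), min over y ∈ Y of V(T(s,x,y)))). Define V₀(s) = min(k, idx(s)) and V_{n+1} = B_k(V_n). Then: (1) the sequence (V_n) is pointwise nondecreasing in n; (2) V_N is a fixed point of B_k for N = k · |S|; and (3) V_N is the least fixed point of B_k, i.e., V_N(s) ≤ W(s) for every s ∈ S and every W : S → ℕ with B_k(W) = W. -/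
/-- The `k`-capped Bellman backup operator for a two-player safety game:
`B_k(V)(s) = min(k, max_{x ∈ X} max(idx s, min_{y ∈ Y} V (T s x y)))`. -/
noncomputable def cappedBellman {S X Y : Type*} [Fintype X] [Fintype Y]
    [Nonempty X] [Nonempty Y]
    (T : S → X → Y → S) (idx : S → ℕ) (k : ℕ) (V : S → ℕ) (s : S) : ℕ :=
  min k (Finset.univ.sup' Finset.univ_nonempty fun x : X =>
    max (idx s) (Finset.univ.inf' Finset.univ_nonempty fun y : Y => V (T s x y)))

/-! The iterates of a monotone map `f` from a point `x ≤ f x` increase, and once two consecutive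
iterates agree the iteration is stationary. For the Bellman operator `∑ s, V s` is a strictly
monotone height, bounded by `k · |S|` along the iteration since every iterate lies below its
successor, whose values are capped at `k`. So at most `k · |S|` steps are strict. -/

open Function

theorem isFixedPt_iterate_of_strictMono {α : Type*} [PartialOrder α] {f : α → α} {x : α}
    {height : α → ℕ} {b : ℕ} (hmono : Monotone fun n => f^[n] x) (hheight : StrictMono height)
    (hbound : ∀ n, height (f^[n] x) ≤ b) : IsFixedPt f (f^[b] x) := by
  have map_eq_of_height_eq (n : ℕ) (hn : height (f^[n] x) = height (f^[n + 1] x)) :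
      f (f^[n] x) = f^[n] x := by
    rw [← iterate_succ_apply' f]
    exact ((hmono n.le_succ).eq_of_not_lt fun hlt => (hheight hlt).ne hn).symm
  have height_stable (n : ℕ) (hn : height (f^[n] x) = height (f^[n + 1] x)) :
      height (f^[n + 1] x) = height (f^[n + 2] x) := by
    simp only [iterate_succ_apply', map_eq_of_height_eq n hn]
  exact map_eq_of_height_eq b
    (Nat.stabilises_of_monotone (hheight.monotone.comp hmono) hbound height_stable b.le_succ).symm

section CappedBellman

variable {S X Y : Type*} [Fintype X] [Fintype Y] [Nonempty X] [Nonempty Y]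
  (T : S → X → Y → S) (idx : S → ℕ) (k : ℕ)

theorem cappedBellman_le (V : S → ℕ) (s : S) : cappedBellman T idx k V s ≤ k :=
  min_le_left _ _

theorem min_idx_le_cappedBellman (V : S → ℕ) (s : S) :
    min k (idx s) ≤ cappedBellman T idx k V s :=
  min_le_min_left k <|
    (Finset.le_sup'_iff _).2 ⟨Classical.arbitrary X, Finset.mem_univ _, le_max_left _ _⟩

theorem cappedBellman_monotone : Monotone (cappedBellman T idx k) := fun _ _ hVW _ =>
  min_le_min_left k <| Finset.sup'_mono_fun fun _ _ =>
    max_le_max_left _ <| Finset.inf'_mono_fun fun _ _ => hVW _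

variable {T idx k}

theorem sum_le_of_le_cappedBellman [Fintype S] {V : S → ℕ} (hV : V ≤ cappedBellman T idx k V) :
    ∑ s, V s ≤ k * Fintype.card S :=
  calc ∑ s, V s ≤ Fintype.card S • k :=
        Finset.sum_le_card_nsmul _ _ _ fun s _ => (hV s).trans (cappedBellman_le T idx k V s)
    _ = k * Fintype.card S := by rw [smul_eq_mul, mul_comm]

theorem isFixedPt_iterate_cappedBellman [Fintype S] {V : S → ℕ}
    (hV : V ≤ cappedBellman T idx k V) :
    IsFixedPt (cappedBellman T idx k) ((cappedBellman T idx k)^[k * Fintype.card S] V) := by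
  have hmono := (cappedBellman_monotone T idx k).monotone_iterate_of_le_map hV
  refine isFixedPt_iterate_of_strictMono hmono Fintype.sum_strictMono fun n =>
    sum_le_of_le_cappedBellman (T := T) (idx := idx) ?_
  rw [← iterate_succ_apply' (cappedBellman T idx k)]
  exact hmono n.le_succ

end CappedBellman

/-- Value iteration for the `k`-capped Bellman backup operator, started from
`V₀(s) = min(k, idx s)`, is pointwise nondecreasing, reaches a fixed point after
`k · |S|` steps, and this fixed point is the least fixed point of `B_k`. -/
theorem cappedBellman_valueIteration {S X Y : Type*}
    [Fintype S] [Fintype X] [Fintype Y]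
    [Nonempty S] [Nonempty X] [Nonempty Y]
    (T : S → X → Y → S) (idx : S → ℕ) (k : ℕ)
    (Vseq : ℕ → S → ℕ)
    (h0 : ∀ s, Vseq 0 s = min k (idx s))
    (hsucc : ∀ n, Vseq (n + 1) = cappedBellman T idx k (Vseq n)) :
    (∀ n s, Vseq n s ≤ Vseq (n + 1) s) ∧
    cappedBellman T idx k (Vseq (k * Fintype.card S)) = Vseq (k * Fintype.card S) ∧
    (∀ W : S → ℕ, cappedBellman T idx k W = W →
      ∀ s, Vseq (k * Fintype.card S) s ≤ W s) := by
  have hB : Monotone (cappedBellman T idx k) := cappedBellman_monotone T idx k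
  have h0_le (W : S → ℕ) : Vseq 0 ≤ cappedBellman T idx k W := fun s =>
    (h0 s).trans_le (min_idx_le_cappedBellman T idx k W s)
  have hiter (n : ℕ) : Vseq n = (cappedBellman T idx k)^[n] (Vseq 0) := by
    induction n with
    | zero => rfl
    | succ n ih => rw [hsucc, ih, iterate_succ_apply']
  refine ⟨fun n => ?_, ?_, fun W hW => ?_⟩
  · rw [hiter n, hiter (n + 1)]
    exact hB.monotone_iterate_of_le_map (h0_le _) n.le_succ
  · rw [hiter]
    exact isFixedPt_iterate_cappedBellman (h0_le _)
  · rw [hiter]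
    exact (hB.iterate _ ((h0_le W).trans_eq hW)).trans_eq (iterate_fixed hW _)
end

section
/- Let S be a type, X a nonempty type, Y a finite nonempty type, T : S → X → Y → S, s₁ ∈ S, and idx : S → ℕ∞. Suppose V : S → ℕ∞ satisfies the Bellman equations, i.e., for all s ∈ S, V(s) = ⨆_{x∈X} max(idx(s), min_{y∈Y} V(T(s,x,y))), and suppose V(s₁) = v with v ≠ ⊤. Let π : S → X → Y be any greedy policy, meaning V(T(s, x, π(s,x))) = min_{y∈Y} V(T(s,x,y)) for all s ∈ S and x ∈ X. Then for every infinite sequence x₁, x₂, … of elements of X, the play s^1 = s₁, s^{n+1} = T(s^n, x_n, π(s^n, x_n)) satisfies idx(s^n) ≤ v and V(s^n) ≤ v for every n ≥ 1. In particular, for every k ∈ ℕ with k > v, the memoryless policy π is winning in the safety game with losing states {s | idx(s) ≥ k}. -/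
/-- The play induced from initial state `s₁` by a one-step transition `step`
and an infinite sequence `x` of environment actions:
`play 0 = s₁`, `play (n+1) = step (play n) (x n)`. -/
def play {S X : Type*} (step : S → X → S) (s₁ : S) (x : ℕ → X) : ℕ → S
  | 0 => s₁
  | n + 1 => step (play step s₁ x n) (x n)

/-- The one-step dynamics obtained from the game transition `T` by letting the system play the
memoryless policy `π`, so that only the environment action remains free. -/
def closedLoop {S X Y : Type*} (T : S → X → Y → S) (π : S → X → Y) (s : S) (x : X) : S :=
  T s x (π s x)

/-- The policy `π` is winning from `s₁` in the safety game with losing states `Bad`. Time is indexed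
from `0`, so `play _ s₁ x n` is the state `s^(n+1)` of the paper. -/
def IsWinningPolicy {S X Y : Type*} (T : S → X → Y → S) (s₁ : S) (Bad : Set S)
    (π : S → X → Y) : Prop :=
  ∀ (x : ℕ → X) (n : ℕ), play (closedLoop T π) s₁ x n ∉ Bad

/-- The policy `π` is greedy for the value function `V`: its response to every environment action
leads to a successor of least value. -/
def IsGreedyPolicy {S X Y L : Type*} [CompleteLattice L] (T : S → X → Y → S) (V : S → L)
    (π : S → X → Y) : Prop :=
  ∀ s x, V (closedLoop T π s x) = ⨅ y, V (T s x y)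

/-- The inequality `≤ V s` in the Bellman equations: `V` is a supersolution, that is, a pre-fixed
point of the Bellman operator. Values may lie in any complete lattice, with `⊔` in place of
`max`. -/
def IsBellmanSupersolution {S X Y L : Type*} [CompleteLattice L] (T : S → X → Y → S)
    (idx V : S → L) : Prop :=
  ∀ s, (⨆ x, idx s ⊔ ⨅ y, V (T s x y)) ≤ V s

theorem antitone_value_play {S X L : Type*} [Preorder L] {step : S → X → S} {V : S → L}
    (hstep : ∀ s x, V (step s x) ≤ V s) (s₁ : S) (x : ℕ → X) :
    Antitone fun n => V (play step s₁ x n) :=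
  antitone_nat_of_succ_le fun n => hstep (play step s₁ x n) (x n)

namespace IsBellmanSupersolution

variable {S X Y L : Type*} [CompleteLattice L] {T : S → X → Y → S} {idx V : S → L}

theorem idx_sup_iInf_le (hV : IsBellmanSupersolution T idx V) (s : S) (x : X) :
    (idx s ⊔ ⨅ y, V (T s x y)) ≤ V s :=
  iSup_le_iff.mp (hV s) x

theorem idx_le [Nonempty X] (hV : IsBellmanSupersolution T idx V) (s : S) : idx s ≤ V s :=
  le_sup_left.trans (hV.idx_sup_iInf_le s (Classical.arbitrary X))

theorem value_closedLoop_le (hV : IsBellmanSupersolution T idx V) {π : S → X → Y}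
    (hπ : IsGreedyPolicy T V π) (s : S) (x : X) : V (closedLoop T π s x) ≤ V s :=
  calc
    V (closedLoop T π s x) = ⨅ y, V (T s x y) := hπ s x
    _ ≤ idx s ⊔ ⨅ y, V (T s x y) := le_sup_right
    _ ≤ V s := hV.idx_sup_iInf_le s x

end IsBellmanSupersolution

theorem isWinningPolicy_of_forall_idx_le {S X Y L : Type*} [Preorder L] {T : S → X → Y → S}
    {s₁ : S} {idx : S → L} {π : S → X → Y} {v k : L}
    (hidx : ∀ x n, idx (play (closedLoop T π) s₁ x n) ≤ v) (hk : v < k) :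
    IsWinningPolicy T s₁ {s | k ≤ idx s} π :=
  fun x n => ((hidx x n).trans_lt hk).not_ge

theorem greedy_policy_winning_general {S X Y L : Type*} [CompleteLattice L]
    {T : S → X → Y → S} {s₁ : S} {idx V : S → L} {v : L} {π : S → X → Y}
    (hV : IsBellmanSupersolution T idx V) (hv : V s₁ ≤ v) (hπ : IsGreedyPolicy T V π) :
    (∀ x n, idx (play (closedLoop T π) s₁ x n) ≤ v ∧ V (play (closedLoop T π) s₁ x n) ≤ v) ∧
      ∀ k, v < k → IsWinningPolicy T s₁ {s | k ≤ idx s} π := by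
  have value_le (x : ℕ → X) (n : ℕ) : V (play (closedLoop T π) s₁ x n) ≤ v :=
    (antitone_value_play (hV.value_closedLoop_le hπ) s₁ x n.zero_le).trans hv
  have idx_le (x : ℕ → X) (n : ℕ) : idx (play (closedLoop T π) s₁ x n) ≤ v :=
    have : Nonempty X := ⟨x 0⟩
    (hV.idx_le _).trans (value_le x n)
  exact ⟨fun x n => ⟨idx_le x n, value_le x n⟩, fun _ => isWinningPolicy_of_forall_idx_le idx_le⟩

/-- If `V : S → ℕ∞` satisfies the Bellman equations with `V s₁ = v ≠ ⊤`, then any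
greedy policy `π` keeps every state of every induced play at index (and value) at
most `v`; in particular, for every `k > v`, the memoryless policy `π` is winning in
the safety game with losing states `{s | idx s ≥ k}`. -/
theorem greedy_policy_winning {S X Y : Type*} [Nonempty X] [Fintype Y] [Nonempty Y]
    (T : S → X → Y → S) (s₁ : S) (idx : S → ℕ∞)
    (V : S → ℕ∞)
    (hV : ∀ s : S, V s = ⨆ x : X, max (idx s) (⨅ y : Y, V (T s x y)))
    (v : ℕ∞) (hv : V s₁ = v) (hvtop : v ≠ ⊤)
    (π : S → X → Y)
    (hπ : ∀ (s : S) (x : X), V (T s x (π s x)) = ⨅ y : Y, V (T s x y))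
    (x : ℕ → X) :
    (∀ n : ℕ, idx (play (fun s x' => T s x' (π s x')) s₁ x n) ≤ v ∧
        V (play (fun s x' => T s x' (π s x')) s₁ x n) ≤ v) ∧
    (∀ k : ℕ, v < (k : ℕ∞) →
      ∀ n : ℕ, ¬ (k : ℕ∞) ≤ idx (play (fun s x' => T s x' (π s x')) s₁ x n)) := by
  have ⟨bounded, winning⟩ := greedy_policy_winning_general (fun s => (hV s).ge) hv.le hπ
  exact ⟨bounded x, fun k hk => winning k hk x⟩
end

section
/- Let S be a type, X and Y finite nonempty types, T : S → X → Y → S, s₁ ∈ S, and idx : S → ℕ. Then the following are equivalent: (i) there exists V : S → ℕ∞ with V(s₁) ≠ ⊤ satisfying the Bellman equations, i.e., for all s ∈ S, V(s) = max_{x∈X} max(idx(s), min_{y∈Y} V(T(s,x,y))); (ii) there exist k ∈ ℕ and a system strategy f mapping nonempty finite sequences of elements of X to elements of Y such that for every infinite sequence x₁, x₂, … of elements of X, every state of the induced play s^1 = s₁, s^{n+1} = T(s^n, x_n, f(x₁,…,x_n)) satisfies idx(s^n) ≤ k. -/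
/-- The play induced from initial state `s₁` by a history-dependent system strategy
`f` (mapping nonempty finite sequences of environment actions to system actions) and
an infinite sequence `x` of environment actions:
`stratPlay 0 = s₁`, `stratPlay (n+1) = T (stratPlay n) (x n) (f (x 0, …, x n))`. -/
def stratPlay {S X Y : Type*} (T : S → X → Y → S) (s₁ : S)
    (f : {l : List X // l ≠ []} → Y) (x : ℕ → X) : ℕ → S
  | 0 => s₁
  | n + 1 =>
      T (stratPlay T s₁ f x n) (x n)
        (f ⟨List.ofFn fun i : Fin (n + 1) => x i, by simp⟩)

/-!
Both conditions say that, for some `k`, `s₁` lies in a set `A` of states of index at most `k` within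
which the system can force the play to stay. A sublevel set of a Bellman solution is such an `A`,
since values are well-ordered and some reply therefore attains the minimum; so is the set of states
reachable under a bounded strategy. Conversely, a system that keeps the play in `A` need only look
at the current state, which the history determines; and the function equal to `k` on `A` and to `⊤`
elsewhere is a supersolution of the Bellman equations, hence dominates their least solution.
-/

/-- Controlled invariance, the notion of a winning region of a safety game: whatever the
environment plays at a state of `A`, the system has a reply that leads back into `A`. -/
def IsControlledInvariant {S X Y : Type*} (T : S → X → Y → S) (A : Set S) : Prop :=
  ∀ s ∈ A, ∀ x, ∃ y, T s x y ∈ A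

section Strategies

variable {S X Y : Type*} (T : S → X → Y → S) (s₁ : S)

theorem stratPlay_congr (f : {l : List X // l ≠ []} → Y) {x x' : ℕ → X} {n : ℕ}
    (h : ∀ i < n, x i = x' i) : stratPlay T s₁ f x n = stratPlay T s₁ f x' n := by
  induction n with
  | zero => rfl
  | succ n ih =>
    have inputs_eq : (fun i : Fin (n + 1) => x i) = fun i : Fin (n + 1) => x' i :=
      funext fun i => h i i.isLt
    simp only [stratPlay, ih fun i hi => h i (hi.trans n.lt_succ_self), h n n.lt_succ_self,
      inputs_eq]

/-- The states occurring in the plays induced by the strategy `f`, over all environment inputs. -/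
def reachableStates (f : {l : List X // l ≠ []} → Y) : Set S :=
  {s | ∃ x n, stratPlay T s₁ f x n = s}

theorem initial_mem_reachableStates [Nonempty X] (f : {l : List X // l ≠ []} → Y) :
    s₁ ∈ reachableStates T s₁ f :=
  ⟨Classical.arbitrary (ℕ → X), 0, rfl⟩

theorem isControlledInvariant_reachableStates (f : {l : List X // l ≠ []} → Y) :
    IsControlledInvariant T (reachableStates T s₁ f) := by
  rintro _ ⟨x, n, rfl⟩ a
  let x' := Function.update x n a
  have same_state : stratPlay T s₁ f x' n = stratPlay T s₁ f x n :=
    stratPlay_congr T s₁ f fun i hi => Function.update_of_ne hi.ne a x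
  have next_action : x' n = a := Function.update_self n a x
  refine ⟨f ⟨List.ofFn fun i : Fin (n + 1) => x' i, by simp⟩, x', n + 1, ?_⟩
  rw [stratPlay, same_state, next_action]

/-- The history-dependent strategy that plays the positional strategy `g : S → X → Y`; the current
state is recomputed by replaying `g` from `s₁` against all environment actions but the last. -/
def positionalStrategy (g : S → X → Y) (l : {l : List X // l ≠ []}) : Y :=
  g (l.1.dropLast.foldl (fun s x => T s x (g s x)) s₁) (l.1.getLast l.2)

theorem stratPlay_positionalStrategy (g : S → X → Y) (x : ℕ → X) (n : ℕ) :
    stratPlay T s₁ (positionalStrategy T s₁ g) x n =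
      (List.ofFn fun i : Fin n => x i).foldl (fun s x => T s x (g s x)) s₁ := by
  induction n with
  | zero => simp [stratPlay]
  | succ n ih =>
    simp only [stratPlay, ih, positionalStrategy, List.ofFn_succ_last, Fin.val_castSucc,
      Fin.val_last, List.dropLast_concat, List.getLast_concat, List.foldl_append,
      List.foldl_cons, List.foldl_nil]

theorem exists_strategy_forall_mem_iff [Nonempty X] [Nonempty Y] (B : Set S) :
    (∃ f, ∀ x n, stratPlay T s₁ f x n ∈ B) ↔
      ∃ A ⊆ B, s₁ ∈ A ∧ IsControlledInvariant T A := by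
  constructor
  · rintro ⟨f, hf⟩
    refine ⟨reachableStates T s₁ f, ?_, initial_mem_reachableStates T s₁ f,
      isControlledInvariant_reachableStates T s₁ f⟩
    rintro _ ⟨x, n, rfl⟩
    exact hf x n
  · rintro ⟨A, hAB, hs₁, hA⟩
    choose! g hg using hA
    refine ⟨positionalStrategy T s₁ g, fun x n => hAB ?_⟩
    rw [stratPlay_positionalStrategy]
    exact List.foldlRecOn _ _ hs₁ fun s hs x _ => hg s hs x

end Strategies

section BellmanEquations

variable {S X Y α : Type*}

/-- The right-hand side of the Bellman equations as a monotone operator on value functions, so that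
the solutions are its fixed points and the supersolutions its pre-fixed points. -/
def bellmanOperator [CompleteLattice α] (T : S → X → Y → S) (idx : S → α) :
    (S → α) →o (S → α) where
  toFun V s := ⨆ x, idx s ⊔ ⨅ y, V (T s x y)
  monotone' _ _ h s := iSup_mono fun x => sup_le_sup_left (iInf_mono fun y => h (T s x y)) _

theorem bellmanOperator_apply [CompleteLattice α] (T : S → X → Y → S) (idx V : S → α) (s : S) :
    bellmanOperator T idx V s = ⨆ x, idx s ⊔ ⨅ y, V (T s x y) :=
  rfl

theorem bellmanOperator_le_iff [CompleteLattice α] [Nonempty X] {T : S → X → Y → S}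
    {idx V : S → α} :
    bellmanOperator T idx V ≤ V ↔ idx ≤ V ∧ ∀ s x, ⨅ y, V (T s x y) ≤ V s := by
  simp only [Pi.le_def, bellmanOperator_apply, iSup_le_iff, sup_le_iff, forall_and, forall_const]

theorem isControlledInvariant_setOf_le [ConditionallyCompleteLinearOrder α] [WellFoundedLT α]
    [Nonempty Y] {T : S → X → Y → S} {V : S → α} (hV : ∀ s x, ⨅ y, V (T s x y) ≤ V s) (k : α) :
    IsControlledInvariant T {s | V s ≤ k} := by
  intro s hs x
  obtain ⟨y, hy⟩ := ciInf_mem fun y => V (T s x y)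
  exact ⟨y, hy.trans_le ((hV s x).trans hs)⟩

theorem IsControlledInvariant.lfp_bellmanOperator_le [CompleteLattice α] {T : S → X → Y → S}
    {idx : S → α} {A : Set S} {k : α} (hA : IsControlledInvariant T A)
    (hidx : ∀ s ∈ A, idx s ≤ k) {s : S} (hs : s ∈ A) :
    (bellmanOperator T idx).lfp s ≤ k := by
  classical
  let W : S → α := fun s => if s ∈ A then k else ⊤
  have W_eq {s : S} (hs : s ∈ A) : W s = k := if_pos hs
  have supersolution : bellmanOperator T idx W ≤ W := by
    intro s
    by_cases hs : s ∈ A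
    · rw [W_eq hs]
      refine iSup_le fun x => sup_le (hidx s hs) ?_
      obtain ⟨y, hy⟩ := hA s hs x
      exact iInf_le_of_le y (W_eq hy).le
    · exact le_top.trans_eq (if_neg hs).symm
  exact ((bellmanOperator T idx).lfp_le supersolution s).trans_eq (W_eq hs)

theorem exists_bellman_solution_le_iff [CompleteLinearOrder α] [WellFoundedLT α] [Nonempty X]
    [Nonempty Y] (T : S → X → Y → S) (s₁ : S) (idx : S → α) (k : α) :
    (∃ V : S → α, V s₁ ≤ k ∧ ∀ s, V s = ⨆ x, max (idx s) (⨅ y, V (T s x y))) ↔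
      ∃ A ⊆ {s | idx s ≤ k}, s₁ ∈ A ∧ IsControlledInvariant T A := by
  constructor
  · rintro ⟨V, hs₁, hV⟩
    obtain ⟨idx_le, iInf_le⟩ : idx ≤ V ∧ ∀ s x, ⨅ y, V (T s x y) ≤ V s :=
      bellmanOperator_le_iff.mp fun s => (hV s).ge
    exact ⟨{s | V s ≤ k}, fun s hs => (idx_le s).trans hs, hs₁,
      isControlledInvariant_setOf_le iInf_le k⟩
  · rintro ⟨A, hAk, hs₁, hA⟩
    exact ⟨(bellmanOperator T idx).lfp, hA.lfp_bellmanOperator_le hAk hs₁,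
      fun s => (congrFun (bellmanOperator T idx).map_lfp s).symm⟩

theorem bellman_solution_iff_bounded_strategy_general [CompleteLinearOrder α] [WellFoundedLT α]
    [Nonempty X] [Nonempty Y] (T : S → X → Y → S) (s₁ : S) (idx : S → α) (k : α) :
    (∃ V : S → α, V s₁ ≤ k ∧ ∀ s, V s = ⨆ x, max (idx s) (⨅ y, V (T s x y))) ↔
      ∃ f : {l : List X // l ≠ []} → Y, ∀ x n, idx (stratPlay T s₁ f x n) ≤ k :=
  (exists_bellman_solution_le_iff T s₁ idx k).trans
    (exists_strategy_forall_mem_iff T s₁ {s | idx s ≤ k}).symm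

end BellmanEquations

theorem enat_ne_top_iff_exists_le {a : ℕ∞} : a ≠ ⊤ ↔ ∃ k : ℕ, a ≤ k :=
  ⟨fun h => (ENat.ne_top_iff_exists.mp h).imp fun _ hk => hk.ge,
    fun ⟨k, hk⟩ => ne_top_of_le_ne_top (ENat.natCast_ne_top k) hk⟩

/-- The Bellman equations have a solution that is finite at the initial state iff
there exist a bound `k` and a history-dependent system strategy keeping the index of
every state of every induced play at most `k`. -/
theorem bellman_solution_iff_bounded_strategy {S X Y : Type*}
    [Fintype X] [Fintype Y] [Nonempty X] [Nonempty Y]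
    (T : S → X → Y → S) (s₁ : S) (idx : S → ℕ) :
    (∃ V : S → ℕ∞, V s₁ ≠ ⊤ ∧
        ∀ s : S, V s = ⨆ x : X, max (idx s : ℕ∞) (⨅ y : Y, V (T s x y))) ↔
    (∃ (k : ℕ) (f : {l : List X // l ≠ []} → Y), ∀ x : ℕ → X, ∀ n : ℕ,
        idx (stratPlay T s₁ f x n) ≤ k) := by
  simp only [enat_ne_top_iff_exists_le, ← exists_and_right, exists_comm (α := S → ℕ∞),
    bellman_solution_iff_bounded_strategy_general T s₁ (fun s => (idx s : ℕ∞)), Nat.cast_le]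
end

section
/- Let Q be a finite type, Σ a type, q₀ ∈ Q, δ : Q → Σ → Finset Q a nondeterministic transition function, and Q_F ⊆ Q a set of rejecting states. Define the bookkeeping vectors as functions Q → WithBot ℕ, with initial vector e₀ given by e₀(q₀) = 0 and e₀(q) = ⊥ for q ≠ q₀, and with step function step(s, σ)(q) = t(q) + c(q), where t(q) is the supremum in WithBot ℕ of {s(q') | q ∈ δ(q', σ)} (equal to ⊥ if this set is empty or all its elements are ⊥), and c(q) = 1 if q ∈ Q_F and c(q) = 0 otherwise, with the convention ⊥ + 1 = ⊥. Then for every finite word w = σ₁⋯σ_n over Σ and every q ∈ Q, the vector obtained by folding step over w starting from e₀ satisfies: its value at q equals the supremum in WithBot ℕ, over all runs r = (r_0, r_1, …, r_n) of the automaton on w (i.e., r_0 = q₀ and r_{j} ∈ δ(r_{j−1}, σ_j) for 1 ≤ j ≤ n) with r_n = q, of the number of indices j with 1 ≤ j ≤ n and r_j ∈ Q_F; in particular, this value is ⊥ exactly when no run on w ends in q. Consequently, the maximum over all q ∈ Q of the folded vector's value at q equals the supremum over all runs of the automaton on w of the number of rejecting states they visit after the initial position. -/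
/-- Initial bookkeeping vector: `0` at the initial state `q₀`, `⊥` elsewhere. -/
def initVec {Q : Type*} [DecidableEq Q] (q₀ : Q) : Q → WithBot ℕ :=
  fun q => if q = q₀ then (0 : ℕ) else ⊥

/-- Bookkeeping step function: `step s σ q = t q + c q`, where
`t q = sup {s q' | q ∈ δ q' σ}` in `WithBot ℕ` (equal to `⊥` if this set is empty or
all its elements are `⊥`), and `c q = 1` if `q ∈ QF` and `c q = 0` otherwise
(with `⊥ + 1 = ⊥`). -/
def stepVec {Q A : Type*} [Fintype Q] [DecidableEq Q]
    (δ : Q → A → Finset Q) (QF : Set Q) [DecidablePred (· ∈ QF)]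
    (s : Q → WithBot ℕ) (σ : A) : Q → WithBot ℕ :=
  fun q =>
    (Finset.univ.filter fun q' : Q => q ∈ δ q' σ).sup s +
      (if q ∈ QF then (1 : WithBot ℕ) else 0)

/-- A run of the nondeterministic automaton `(Q, q₀, δ)` on the finite word `w`:
a sequence `r₀, r₁, …, r_n` (`n = w.length`) with `r₀ = q₀` and
`r_{j+1} ∈ δ (r_j) (w_j)`. -/
def IsRun {Q A : Type*} (δ : Q → A → Finset Q) (q₀ : Q) (w : List A)
    (r : Fin (w.length + 1) → Q) : Prop :=
  r 0 = q₀ ∧ ∀ j : Fin w.length, r j.succ ∈ δ (r j.castSucc) (w.get j)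

instance {Q A : Type*} [DecidableEq Q] (δ : Q → A → Finset Q) (q₀ : Q) (w : List A) :
    DecidablePred (IsRun δ q₀ w) := fun r => by
  unfold IsRun; infer_instance

/-- The co-Büchi count of a run: the number of positions `1 ≤ j ≤ n` at which the run
visits a rejecting state. -/
def runCount {Q A : Type*} (QF : Set Q) [DecidablePred (· ∈ QF)] (w : List A)
    (r : Fin (w.length + 1) → Q) : ℕ :=
  (Finset.univ.filter fun j : Fin w.length => r j.succ ∈ QF).card

/-!
Suprema are compared through their upper bounds. For an arbitrary initial vector `s`, the folded
vector is at most `b` at `q` iff `s (r 0)` plus the count of `r` is at most `b` for every path `r`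
along the word that ends in `q`. Allowing every `s` makes induction on the first letter possible,
because adding a constant commutes with suprema in `WithBot ℕ`. With `initVec q₀` in place of `s`,
the paths that do not start in `q₀` contribute `⊥`, so exactly the runs remain.
-/

theorem withBot_finset_sup_add {ι M : Type*} [LinearOrder M] [Add M] [AddRightMono M]
    (t : Finset ι) (f : ι → WithBot M) (c : WithBot M) :
    t.sup f + c = t.sup fun i => f i + c :=
  Finset.apply_sup_eq_sup_comp_of_linearOrder (· + c) (fun _ _ h => add_le_add_left h c)
    (WithBot.bot_add c)

section Cons

variable {Q A : Type*}

theorem isRun_vecCons_iff (δ : Q → A → Finset Q) (q₀ q : Q) (σ : A) (w : List A)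
    (r : Fin (w.length + 1) → Q) :
    IsRun δ q₀ (σ :: w) (Matrix.vecCons q r) ↔
      q = q₀ ∧ r 0 ∈ δ q σ ∧ IsRun δ (r 0) w r := by
  simp only [IsRun, true_and]
  exact and_congr_right' (Fin.forall_fin_succ (n := w.length))

theorem runCount_vecCons (QF : Set Q) [DecidablePred (· ∈ QF)] (q : Q) (σ : A) (w : List A)
    (r : Fin (w.length + 1) → Q) :
    runCount QF (σ :: w) (Matrix.vecCons q r) =
      (if r 0 ∈ QF then 1 else 0) + runCount QF w r :=
  Fin.card_filter_univ_succ' (n := w.length) fun j => r j ∈ QF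

end Cons

section Fold

variable {Q A : Type*} [Fintype Q] [DecidableEq Q]
  (δ : Q → A → Finset Q) (QF : Set Q) [DecidablePred (· ∈ QF)]

theorem stepVec_add_runCount_le_iff (s : Q → WithBot ℕ) (σ : A) (w : List A)
    (r : Fin (w.length + 1) → Q) (b : WithBot ℕ) :
    stepVec δ QF s σ (r 0) + runCount QF w r ≤ b ↔
      ∀ q, r 0 ∈ δ q σ → s q + runCount QF (σ :: w) (Matrix.vecCons q r) ≤ b := by
  simp only [stepVec, withBot_finset_sup_add, add_assoc, Finset.sup_le_iff, Finset.mem_filter,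
    Finset.mem_univ, true_and, runCount_vecCons, Nat.cast_add, Nat.cast_ite,
    Nat.cast_one, Nat.cast_zero]

theorem foldl_stepVec_le_iff (w : List A) (s : Q → WithBot ℕ) (q : Q) (b : WithBot ℕ) :
    w.foldl (stepVec δ QF) s q ≤ b ↔
      ∀ r : Fin (w.length + 1) → Q, IsRun δ (r 0) w r → r (Fin.last w.length) = q →
        s (r 0) + runCount QF w r ≤ b := by
  induction w generalizing s with
  | nil =>
    refine ⟨fun h r _ hr => ?_, fun h => ?_⟩
    · rw [← hr] at h
      simpa [runCount] using h
    · simpa [runCount] using h (fun _ => q) ⟨rfl, fun j => j.elim0⟩ rfl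
  | cons σ w ih =>
    calc
      (σ :: w).foldl (stepVec δ QF) s q ≤ b ↔ ∀ r : Fin (w.length + 1) → Q,
          IsRun δ (r 0) w r → r (Fin.last w.length) = q →
            ∀ q', r 0 ∈ δ q' σ → s q' + runCount QF (σ :: w) (Matrix.vecCons q' r) ≤ b := by
        simp only [List.foldl_cons, ih, stepVec_add_runCount_le_iff]
      _ ↔ ∀ (q' : Q) (r : Fin (w.length + 1) → Q),
            IsRun δ q' (σ :: w) (Matrix.vecCons q' r) → r (Fin.last w.length) = q →
              s q' + runCount QF (σ :: w) (Matrix.vecCons q' r) ≤ b := by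
        simp only [isRun_vecCons_iff, true_and]
        grind
      _ ↔ _ := ⟨fun h r => Fin.consCases (α := fun _ => Q) h r,
        fun h q' r => h (Matrix.vecCons q' r)⟩

theorem foldl_stepVec_initVec_le_iff (q₀ : Q) (w : List A) (q : Q) (b : WithBot ℕ) :
    w.foldl (stepVec δ QF) (initVec q₀) q ≤ b ↔
      ∀ r : Fin (w.length + 1) → Q, IsRun δ q₀ w r → r (Fin.last w.length) = q →
        runCount QF w r ≤ b := by
  rw [foldl_stepVec_le_iff]
  refine forall_congr' fun r => ?_
  by_cases h : r 0 = q₀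
  · simp [initVec, h]
  · simp [initVec, h, IsRun]

theorem foldl_stepVec_initVec_eq_sup (q₀ : Q) (w : List A) (q : Q) :
    w.foldl (stepVec δ QF) (initVec q₀) q =
      (Finset.univ.filter fun r : Fin (w.length + 1) → Q =>
        IsRun δ q₀ w r ∧ r (Fin.last w.length) = q).sup fun r => (runCount QF w r : WithBot ℕ) :=
  eq_of_forall_ge_iff fun b => by
    simp only [foldl_stepVec_initVec_le_iff, Finset.sup_le_iff, Finset.mem_filter,
      Finset.mem_univ, true_and, and_imp]

theorem foldl_stepVec_initVec_eq_bot_iff (q₀ : Q) (w : List A) (q : Q) :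
    w.foldl (stepVec δ QF) (initVec q₀) q = ⊥ ↔
      ¬ ∃ r : Fin (w.length + 1) → Q, IsRun δ q₀ w r ∧ r (Fin.last w.length) = q := by
  simp only [foldl_stepVec_initVec_eq_sup, Finset.sup_eq_bot_iff, Finset.mem_filter,
    Finset.mem_univ, true_and, WithBot.natCast_ne_bot, imp_false, not_exists]

theorem sup_foldl_stepVec_initVec (q₀ : Q) (w : List A) :
    Finset.univ.sup (w.foldl (stepVec δ QF) (initVec q₀)) =
      (Finset.univ.filter fun r : Fin (w.length + 1) → Q => IsRun δ q₀ w r).sup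
        fun r => (runCount QF w r : WithBot ℕ) :=
  eq_of_forall_ge_iff fun b => by
    simp only [Finset.sup_le_iff, foldl_stepVec_initVec_le_iff, Finset.mem_filter,
      Finset.mem_univ, true_and, forall_const]
    exact ⟨fun h r hr => h _ r hr rfl, fun h _ r hr _ => h r hr⟩

end Fold

/-- Correctness of the bookkeeping construction: after folding the step function over
a finite word `w` from the initial vector, the value at each automaton state `q` is
the supremum (in `WithBot ℕ`) of the co-Büchi counts of the runs on `w` ending in
`q`; in particular it is `⊥` exactly when no run on `w` ends in `q`. Consequently,
the maximum over all `q` of the folded vector equals the supremum over all runs on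
`w` of the number of rejecting states they visit after the initial position. -/
theorem bookkeeping_fold_eq_sup_runCount {Q A : Type*} [Fintype Q] [DecidableEq Q]
    (q₀ : Q) (δ : Q → A → Finset Q) (QF : Set Q) [DecidablePred (· ∈ QF)]
    (w : List A) :
    (∀ q : Q,
      (w.foldl (stepVec δ QF) (initVec q₀)) q =
        (Finset.univ.filter fun r : Fin (w.length + 1) → Q =>
            IsRun δ q₀ w r ∧ r (Fin.last w.length) = q).sup
          (fun r => (runCount QF w r : WithBot ℕ)) ∧
      ((w.foldl (stepVec δ QF) (initVec q₀)) q = ⊥ ↔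
        ¬ ∃ r : Fin (w.length + 1) → Q,
            IsRun δ q₀ w r ∧ r (Fin.last w.length) = q)) ∧
    Finset.univ.sup (fun q : Q => (w.foldl (stepVec δ QF) (initVec q₀)) q) =
      (Finset.univ.filter fun r : Fin (w.length + 1) → Q => IsRun δ q₀ w r).sup
        (fun r => (runCount QF w r : WithBot ℕ)) := by
  exact ⟨fun q => ⟨foldl_stepVec_initVec_eq_sup δ QF q₀ w q,
    foldl_stepVec_initVec_eq_bot_iff δ QF q₀ w q⟩, sup_foldl_stepVec_initVec δ QF q₀ w⟩
end

section
/- Let Q be a finite type, Σ a type, q₀ ∈ Q, δ : Q → Σ → Finset Q, Q_F ⊆ Q, and k ∈ ℕ. Let step be the bookkeeping step function on vectors Q → WithBot ℕ (step(s, σ)(q) = t(q) + c(q), where t(q) = sup{s(q') | q ∈ δ(q', σ)} in WithBot ℕ, c(q) = 1 if q ∈ Q_F else 0, and ⊥ + 1 = ⊥), and let step_k be its k-capped version, step_k(s, σ)(q) = min(k, step(s, σ)(q)) in WithBot ℕ. Let e₀ be the initial vector with e₀(q₀) = 0 and e₀(q) = ⊥ otherwise. Then for every finite word w over Σ and every q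 ∈ Q, the result of folding step_k over w from e₀, evaluated at q, equals min(k, v(q)), where v is the result of folding the uncapped step over w from e₀. -/
/-- The `k`-capped bookkeeping step function: every component is truncated at `k`
after each step. -/
def stepVecCapped {Q A : Type*} [Fintype Q] [DecidableEq Q]
    (δ : Q → A → Finset Q) (QF : Set Q) [DecidablePred (· ∈ QF)] (k : ℕ)
    (s : Q → WithBot ℕ) (σ : A) : Q → WithBot ℕ :=
  fun q => min (k : WithBot ℕ) (stepVec δ QF s σ q)

theorem min_min_add_of_nonneg {M : Type*} [AddZeroClass M] [LinearOrder M] [AddLeftMono M]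
    {c : M} (hc : 0 ≤ c) (k x : M) : min k (min k x + c) = min k (x + c) := by
  rcases le_total x k with hxk | hkx
  · rw [min_eq_right hxk]
  · have hkxc : k ≤ x + c := le_add_of_le_of_nonneg hkx hc
    rw [min_eq_left hkx, min_eq_left (le_add_of_nonneg_right hc), min_eq_left hkxc]

theorem initVec_le_natCast {Q : Type*} [DecidableEq Q] (q₀ : Q) (k : ℕ) (q : Q) :
    initVec q₀ q ≤ k := by
  unfold initVec
  split_ifs
  · exact WithBot.coe_le_coe.mpr k.zero_le
  · exact bot_le

section Fold

variable {Q A : Type*} [Fintype Q] [DecidableEq Q]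
  (δ : Q → A → Finset Q) (QF : Set Q) [DecidablePred (· ∈ QF)] (k : ℕ)

theorem stepVecCapped_min (s : Q → WithBot ℕ) (σ : A) :
    stepVecCapped δ QF k (fun q => min (k : WithBot ℕ) (s q)) σ =
      fun q => min (k : WithBot ℕ) (stepVec δ QF s σ q) := by
  funext q
  have sup_min : (Finset.univ.filter fun q' : Q => q ∈ δ q' σ).sup
        (fun q' => min (k : WithBot ℕ) (s q')) =
      min (k : WithBot ℕ) ((Finset.univ.filter fun q' : Q => q ∈ δ q' σ).sup s) :=
    (Finset.sup_inf_distrib_left _ _ _).symm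
  have count_nonneg : (0 : WithBot ℕ) ≤ if q ∈ QF then 1 else 0 := by
    split_ifs <;> simp
  simp only [stepVecCapped, stepVec, sup_min, min_min_add_of_nonneg count_nonneg]

theorem foldl_stepVecCapped_eq_min_general (s : Q → WithBot ℕ) (w : List A) :
    w.foldl (stepVecCapped δ QF k) (fun q => min (k : WithBot ℕ) (s q)) =
      fun q => min (k : WithBot ℕ) (w.foldl (stepVec δ QF) s q) :=
  List.foldl_hom (fun (v : Q → WithBot ℕ) q => min (k : WithBot ℕ) (v q))
    (stepVecCapped_min δ QF k)

end Fold

/-- Capping is sound: folding the `k`-capped step over a word from the initial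
vector agrees, at every automaton state, with the `k`-truncation of the fold of the
uncapped step. -/
theorem foldl_stepVecCapped_eq_min {Q A : Type*} [Fintype Q] [DecidableEq Q]
    (q₀ : Q) (δ : Q → A → Finset Q) (QF : Set Q) [DecidablePred (· ∈ QF)] (k : ℕ)
    (w : List A) (q : Q) :
    (w.foldl (stepVecCapped δ QF k) (initVec q₀)) q =
      min (k : WithBot ℕ) ((w.foldl (stepVec δ QF) (initVec q₀)) q) := by
  simpa only [min_eq_right (initVec_le_natCast q₀ k _)] using
    congrFun (foldl_stepVecCapped_eq_min_general δ QF k (initVec q₀) w) q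
end

section
/- Let Q be a finite type, X and Y nonempty types, q₀ ∈ Q, δ : Q → (X × Y) → Finset Q with δ(q, σ) nonempty for all q and σ, Q_F ⊆ Q, and k ≥ 1 a natural number. Then the following are equivalent: (i) there exists a strategy f mapping nonempty finite sequences of elements of X to elements of Y such that for every infinite sequence x₁, x₂, … over X, every run of the automaton on every finite prefix of the induced play (x₁, f(x₁)), (x₂, f(x₁,x₂)), … visits rejecting states at most k − 1 times after the initial position; (ii) there exists a memoryless policy π winning from the initial state in the safety game whose states are vectors s : Q → WithBot ℕ, whose environment actions are X and system actions are Y, whose transition maps (s, x, y) to step_k(s, (x,y)) (the k-capped bookkeeping step), whose initial state is the vector e₀ with e₀(q₀) = 0 and e₀(q) = ⊥ otherwise, and whose losing states are {s | s(q) = k for some q ∈ Q}. -/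
/-- The length-`n` prefix of the play over the alphabet `X × Y` induced by a
history-dependent system strategy `f` and an infinite environment sequence `x`:
`(x₀, f(x₀)), (x₁, f(x₀,x₁)), …, (x_{n-1}, f(x₀,…,x_{n-1}))`. -/
def playWord {X Y : Type*} (f : {l : List X // l ≠ []} → Y) (x : ℕ → X)
    (n : ℕ) : List (X × Y) :=
  List.ofFn fun i : Fin n =>
    (x i, f ⟨List.ofFn fun j : Fin (i + 1) => x j, by simp⟩)

/-- The play of the `k`-capped safety game induced by a memoryless policy
`π : (Q → WithBot ℕ) → X → Y` and an infinite environment sequence `x`, starting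
from the initial bookkeeping vector. -/
def gamePlay {Q X Y : Type*} [Fintype Q] [DecidableEq Q]
    (δ : Q → X × Y → Finset Q) (QF : Set Q) [DecidablePred (· ∈ QF)] (k : ℕ)
    (q₀ : Q) (π : (Q → WithBot ℕ) → X → Y) (x : ℕ → X) : ℕ → (Q → WithBot ℕ)
  | 0 => initVec q₀
  | n + 1 =>
      stepVecCapped δ QF k (gamePlay δ QF k q₀ π x n)
        (x n, π (gamePlay δ QF k q₀ π x n) (x n))

/-!
After reading a word `w`, the uncapped bookkeeping vector holds at `q` the largest count of a run
on `w` ending in `q` (`⊥` if there is none), and capping commutes with the bookkeeping step. Hence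
some run on `w` has count at least `k` iff the capped vector has a component equal to `k`: the
count is a safety condition on the state of a deterministic transition system. In a safety game
the set of states from which a history-dependent strategy wins is one the system can always stay
inside by a single move, and choosing such a move at each state gives a memoryless winning policy.
-/

section Runs

variable {Q A : Type*} (δ : Q → A → Finset Q) (QF : Set Q) [DecidablePred (· ∈ QF)]

theorem isRun_cons_iff (p p' : Q) (a : A) (w : List A) (r : Fin (w.length + 1) → Q) :
    IsRun δ p (a :: w) (Fin.cons p' r) ↔ p' = p ∧ r 0 ∈ δ p' a ∧ IsRun δ (r 0) w r := by
  refine and_congr Iff.rfl (Fin.forall_fin_succ.trans (and_congr Iff.rfl ?_))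
  exact (and_iff_right rfl).symm

theorem runCount_cons (p : Q) (a : A) (w : List A) (r : Fin (w.length + 1) → Q) :
    runCount QF (a :: w) (Fin.cons p r) = (if r 0 ∈ QF then 1 else 0) + runCount QF w r :=
  Fin.card_filter_univ_succ' _

variable [Fintype Q] [DecidableEq Q]

theorem natCast_le_stepVec_add_iff (s : Q → WithBot ℕ) (a : A) (q : Q) (m c : ℕ) :
    (m : WithBot ℕ) ≤ stepVec δ QF s a q + c ↔
      ∃ p, q ∈ δ p a ∧ (m : WithBot ℕ) ≤ s p + ((if q ∈ QF then 1 else 0) + c : ℕ) := by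
  have sup_add (S : Finset Q) (d : WithBot ℕ) : S.sup s + d = S.sup fun p => s p + d :=
    Finset.apply_sup_eq_sup_comp_of_linearOrder (· + d) (fun _ _ h => add_le_add_left h d)
      (WithBot.bot_add d)
  have bot_lt : (⊥ : WithBot ℕ) < m := WithBot.bot_lt_coe m
  rw [stepVec, add_assoc, sup_add, Finset.le_sup_iff bot_lt]
  simp only [Finset.mem_filter, Finset.mem_univ, true_and]
  push_cast
  rfl

theorem natCast_le_foldl_stepVec_iff (s : Q → WithBot ℕ) (w : List A) (q : Q) (m : ℕ) :
    (m : WithBot ℕ) ≤ w.foldl (stepVec δ QF) s q ↔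
      ∃ p r, IsRun δ p w r ∧ r (Fin.last _) = q ∧ (m : WithBot ℕ) ≤ s p + runCount QF w r := by
  induction w generalizing s with
  | nil =>
    constructor
    · intro hm
      exact ⟨q, fun _ => q, ⟨rfl, fun j => j.elim0⟩, rfl, by simpa [runCount] using hm⟩
    · rintro ⟨p, r, ⟨rfl, -⟩, rfl, hm⟩
      simpa [runCount] using hm
  | cons a w ih =>
    rw [List.foldl_cons, ih]
    constructor
    · rintro ⟨p', r, hr, hq, hm⟩
      obtain ⟨p, hp, hm⟩ := (natCast_le_stepVec_add_iff δ QF s a p' m _).mp hm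
      obtain rfl : r 0 = p' := hr.1
      exact ⟨p, Fin.cons p r, (isRun_cons_iff δ p p a w r).mpr ⟨rfl, hp, hr⟩, hq,
        by rwa [runCount_cons]⟩
    · rintro ⟨p, r, hr, hq, hm⟩
      cases r using Fin.consCases with | _ p' r =>
      obtain ⟨rfl, hp, hr⟩ := (isRun_cons_iff δ p p' a w r).mp hr
      rw [runCount_cons] at hm
      exact ⟨r 0, r, hr, hq, (natCast_le_stepVec_add_iff δ QF s a (r 0) m _).mpr ⟨p', hp, hm⟩⟩

theorem natCast_le_foldl_stepVec_initVec_iff (q₀ : Q) (w : List A) (q : Q) (m : ℕ) :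
    (m : WithBot ℕ) ≤ w.foldl (stepVec δ QF) (initVec q₀) q ↔
      ∃ r, IsRun δ q₀ w r ∧ r (Fin.last _) = q ∧ m ≤ runCount QF w r := by
  rw [natCast_le_foldl_stepVec_iff]
  constructor
  · rintro ⟨p, r, hr, hq, hm⟩
    obtain rfl | hp := eq_or_ne p q₀
    · exact ⟨r, hr, hq, by simpa [initVec] using hm⟩
    · simp [initVec, hp] at hm
  · rintro ⟨r, hr, hq, hm⟩
    exact ⟨q₀, r, hr, hq, by simpa [initVec] using hm⟩

end Runs

section Capping

variable {Q A : Type*}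

/-- Truncation of a bookkeeping vector at `k`, componentwise; it relates the capped to the uncapped
bookkeeping. -/
def capVec (k : ℕ) (s : Q → WithBot ℕ) : Q → WithBot ℕ :=
  fun q => min (k : WithBot ℕ) (s q)

theorem capVec_initVec [DecidableEq Q] (k : ℕ) (q₀ : Q) : capVec k (initVec q₀) = initVec q₀ := by
  funext q
  refine min_eq_right ?_
  unfold initVec
  split_ifs
  · exact_mod_cast Nat.zero_le k
  · exact bot_le

variable [Fintype Q] [DecidableEq Q] (δ : Q → A → Finset Q) (QF : Set Q) [DecidablePred (· ∈ QF)]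

theorem stepVecCapped_capVec (k : ℕ) (s : Q → WithBot ℕ) (a : A) :
    stepVecCapped δ QF k (capVec k s) a = capVec k (stepVec δ QF s a) := by
  have cap_sup (S : Finset Q) : S.sup (capVec k s) = min (k : WithBot ℕ) (S.sup s) :=
    (Finset.sup_inf_distrib_left S s k).symm
  have min_min_add (t : WithBot ℕ) {c : WithBot ℕ} (hc : 0 ≤ c) :
      min (k : WithBot ℕ) (min (k : WithBot ℕ) t + c) = min (k : WithBot ℕ) (t + c) := by
    rw [← min_add_add_right, ← min_assoc, min_eq_left (le_add_of_nonneg_right hc)]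
  funext q
  rw [stepVecCapped, stepVec, cap_sup, min_min_add _ (by split_ifs <;> simp)]
  rfl

theorem foldl_stepVecCapped_initVec (k : ℕ) (q₀ : Q) (w : List A) :
    w.foldl (stepVecCapped δ QF k) (initVec q₀) =
      capVec k (w.foldl (stepVec δ QF) (initVec q₀)) := by
  conv_lhs => rw [← capVec_initVec k q₀]
  exact List.foldl_hom (capVec k) (stepVecCapped_capVec δ QF k)

theorem forall_runCount_lt_iff (q₀ : Q) (w : List A) (k : ℕ) :
    (∀ r, IsRun δ q₀ w r → runCount QF w r < k) ↔
      ¬ ∃ q, w.foldl (stepVecCapped δ QF k) (initVec q₀) q = (k : WithBot ℕ) := by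
  simp only [foldl_stepVecCapped_initVec, capVec, min_eq_left_iff,
    natCast_le_foldl_stepVec_initVec_iff]
  push Not
  exact ⟨fun h _ r hr _ => h r hr, fun h r hr => h _ r hr rfl⟩

end Capping

section SafetyGame

variable {S X Y : Type*} (step : S → X × Y → S)

/-- The transition function of the game once the system plays the memoryless policy `π`. -/
def policyStep (π : S → X → Y) (s : S) (a : X) : S :=
  step s (a, π s a)

/-- The winning region of the safety game with safe states `Safe`: the states from which some
history-dependent strategy keeps every play inside `Safe`. -/
def winningRegion (Safe : Set S) : Set S :=
  {s | ∃ f : {l : List X // l ≠ []} → Y, ∀ x n, (playWord f x n).foldl step s ∈ Safe}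

/-- The history-dependent strategy that plays the memoryless policy `π` from the state `s`. The last
letter of its argument is the current input, answered in the state reached on the earlier ones. -/
def strategyOfPolicy (π : S → X → Y) (s : S) (l : {l : List X // l ≠ []}) : Y :=
  π (l.1.dropLast.foldl (policyStep step π) s) (l.1.getLast l.2)

theorem playWord_succ (f : {l : List X // l ≠ []} → Y) (x : ℕ → X) (n : ℕ) :
    playWord f x (n + 1) = (x 0, f ⟨[x 0], List.cons_ne_nil _ _⟩) ::
      playWord (fun l => f ⟨x 0 :: l.1, List.cons_ne_nil _ _⟩) (fun i => x (i + 1)) n := by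
  simp [playWord, List.ofFn_succ]

theorem exists_step_mem_winningRegion {Safe : Set S} {s : S} (hs : s ∈ winningRegion step Safe)
    (a : X) : ∃ y, step s (a, y) ∈ winningRegion step Safe := by
  obtain ⟨f, hf⟩ := hs
  refine ⟨f ⟨[a], List.cons_ne_nil _ _⟩, fun l => f ⟨a :: l.1, List.cons_ne_nil _ _⟩,
    fun x n => ?_⟩
  have h := hf (fun i => i.casesOn a x) (n + 1)
  rwa [playWord_succ] at h

theorem exists_policy_of_forall_exists_step_mem {W : Set S} (hW : W.Nonempty)
    (h : ∀ s ∈ W, ∀ a, ∃ y, step s (a, y) ∈ W) :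
    ∃ π : S → X → Y, ∀ s ∈ W, ∀ u : List X, u.foldl (policyStep step π) s ∈ W := by
  have hmove : ∀ s a, ∃ y, s ∈ W → step s (a, y) ∈ W := fun s a => by
    by_cases hs : s ∈ W
    · exact (h s hs a).imp fun _ hy _ => hy
    · obtain ⟨s', hs'⟩ := hW
      exact (h s' hs' a).imp fun _ _ hs'' => absurd hs'' hs
  choose π hπ using hmove
  exact ⟨π, fun s hs u => List.foldlRecOn u _ hs fun s hs a _ => hπ s a hs⟩

theorem foldl_playWord_strategyOfPolicy (π : S → X → Y) (s : S) (x : ℕ → X) (n : ℕ) :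
    (playWord (strategyOfPolicy step π s) x n).foldl step s =
      (List.ofFn fun i : Fin n => x i).foldl (policyStep step π) s := by
  induction n generalizing s x with
  | zero => rfl
  | succ n ih =>
    have tail_eq : (fun l : {l : List X // l ≠ []} =>
        strategyOfPolicy step π s ⟨x 0 :: l.1, List.cons_ne_nil _ _⟩) =
          strategyOfPolicy step π (policyStep step π s (x 0)) := by
      funext l
      simp only [strategyOfPolicy, List.dropLast_cons_of_ne_nil l.2, List.getLast_cons l.2,
        List.foldl_cons]
    rw [playWord_succ, tail_eq, List.ofFn_succ]
    exact ih _ _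

theorem exists_strategy_iff_exists_policy (Safe : Set S) (s₀ : S) :
    (∃ f : {l : List X // l ≠ []} → Y, ∀ x n, (playWord f x n).foldl step s₀ ∈ Safe) ↔
      ∃ π : S → X → Y, ∀ (x : ℕ → X) (n : ℕ),
        (List.ofFn fun i : Fin n => x i).foldl (policyStep step π) s₀ ∈ Safe := by
  constructor
  · intro (hs₀ : s₀ ∈ winningRegion step Safe)
    obtain ⟨π, hπ⟩ := exists_policy_of_forall_exists_step_mem step ⟨s₀, hs₀⟩
      fun _ => exists_step_mem_winningRegion step
    refine ⟨π, fun x n => ?_⟩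
    obtain ⟨_, hf⟩ := hπ s₀ hs₀ (List.ofFn fun i : Fin n => x i)
    exact hf x 0
  · rintro ⟨π, hπ⟩
    refine ⟨strategyOfPolicy step π s₀, fun x n => ?_⟩
    rw [foldl_playWord_strategyOfPolicy]
    exact hπ x n

end SafetyGame

theorem gamePlay_eq_foldl {Q X Y : Type*} [Fintype Q] [DecidableEq Q]
    (δ : Q → X × Y → Finset Q) (QF : Set Q) [DecidablePred (· ∈ QF)] (k : ℕ) (q₀ : Q)
    (π : (Q → WithBot ℕ) → X → Y) (x : ℕ → X) (n : ℕ) :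
    gamePlay δ QF k q₀ π x n =
      (List.ofFn fun i : Fin n => x i).foldl (policyStep (stepVecCapped δ QF k) π)
        (initVec q₀) := by
  induction n with
  | zero => rfl
  | succ n ih =>
    rw [gamePlay, ih, List.ofFn_succ', List.concat_eq_append, List.foldl_append]
    rfl

theorem bounded_synthesis_iff_safety_game_general {Q X Y : Type*} [Fintype Q] [DecidableEq Q]
    (q₀ : Q) (δ : Q → X × Y → Finset Q) (QF : Set Q) [DecidablePred (· ∈ QF)] (k : ℕ) :
    (∃ f : {l : List X // l ≠ []} → Y, ∀ x : ℕ → X, ∀ n : ℕ,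
        ∀ r : Fin ((playWord f x n).length + 1) → Q,
          IsRun δ q₀ (playWord f x n) r → runCount QF (playWord f x n) r < k) ↔
    (∃ π : (Q → WithBot ℕ) → X → Y, ∀ x : ℕ → X, ∀ n : ℕ,
        ¬ ∃ q : Q, gamePlay δ QF k q₀ π x n q = (k : WithBot ℕ)) := by
  simp only [forall_runCount_lt_iff, gamePlay_eq_foldl]
  exact exists_strategy_iff_exists_policy (stepVecCapped δ QF k)
    {s | ¬ ∃ q, s q = (k : WithBot ℕ)} (initVec q₀)

/-- Bounded synthesis as a safety game: there is a history-dependent system strategy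
such that every run of the universal co-Büchi automaton on every finite prefix of
every induced play visits rejecting states at most `k - 1` times (after the initial
position) iff there is a memoryless policy winning from the initial vector in the
`k`-capped safety game whose losing states are the vectors with some component equal
to `k`. -/
theorem bounded_synthesis_iff_safety_game {Q X Y : Type*} [Fintype Q] [DecidableEq Q]
    [Nonempty X] [Nonempty Y]
    (q₀ : Q) (δ : Q → X × Y → Finset Q) (hδ : ∀ (q : Q) (σ : X × Y), (δ q σ).Nonempty)
    (QF : Set Q) [DecidablePred (· ∈ QF)]
    (k : ℕ) (hk : 1 ≤ k) :
    (∃ f : {l : List X // l ≠ []} → Y, ∀ x : ℕ → X, ∀ n : ℕ,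
        ∀ r : Fin ((playWord f x n).length + 1) → Q,
          IsRun δ q₀ (playWord f x n) r → runCount QF (playWord f x n) r ≤ k - 1) ↔
    (∃ π : (Q → WithBot ℕ) → X → Y, ∀ x : ℕ → X, ∀ n : ℕ,
        ¬ ∃ q : Q, gamePlay δ QF k q₀ π x n q = (k : WithBot ℕ)) := by
  simpa only [← Nat.lt_iff_le_pred hk] using
    bounded_synthesis_iff_safety_game_general q₀ δ QF k
end
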